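/- arXiv:1506.08912 — 2 statements merged into one kernel-verified Lean document; each statement's English description precedes it below -/
import Mathlib

section
/- For every real β ≥ 0, all integers m ≥ n ≥ 0, and all z, w ∈ ℂ: z·Z^{(β)}_{m,n}(z,w) − ∂_w Z^{(β)}_{m,n}(z,w) = Z^{(β)}_{m+1,n}(z,w). (Action of the raising operator a₁† = z − ∂_w on the 2D Laguerre polynomials.) -/
open Finset

/-- Pochhammer symbol `(a)_j = a (a+1) ⋯ (a+j-1)`. -/
noncomputable def poch (a : ℝ) (j : ℕ) : ℝ := ∏ i ∈ Finset.range j, (a + i)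

/-- The generalized 2D Laguerre polynomial `Z^{(β)}_{m,n}(z,w)` (for `m ≥ n`). -/
noncomputable def Zc (β : ℝ) (m n : ℕ) (z w : ℂ) : ℂ :=
  ∑ k ∈ Finset.range (n + 1),
    (((-1 : ℝ) ^ (n - k) * poch (β + 1) m /
        (k.factorial * (n - k).factorial * poch (β + 1) (m - k)) : ℝ) : ℂ) *
      z ^ (m - k) * w ^ (n - k)

lemma poch_succ_aux (a : ℝ) (j : ℕ) : poch a (j + 1) = poch a j * (a + j) := by
  simp [poch, Finset.prod_range_succ]

lemma poch_pos_aux (a : ℝ) (ha : 0 < a) (j : ℕ) : 0 < poch a j := by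
  unfold poch
  exact Finset.prod_pos (fun i _ => by positivity)

lemma Zc_deriv_aux (β : ℝ) (m n : ℕ) (z w : ℂ) :
    deriv (fun w' => Zc β m n z w') w = ∑ k ∈ Finset.range (n + 1),
    (((-1 : ℝ) ^ (n - k) * poch (β + 1) m /
        (k.factorial * (n - k).factorial * poch (β + 1) (m - k)) : ℝ) : ℂ) *
      z ^ (m - k) * (((n - k : ℕ) : ℂ) * w ^ (n - k - 1)) := by
  apply HasDerivAt.deriv
  unfold Zc
  apply HasDerivAt.fun_sum
  intro k _
  exact (hasDerivAt_pow (n - k) w).const_mul _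

lemma coef_aux (β : ℝ) (hβ : 0 ≤ β) (l k j : ℕ) :
    (-1 : ℝ) ^ j * poch (β + 1) (l + k + 1) /
        ((k + 1).factorial * j.factorial * poch (β + 1) l)
      - (-1 : ℝ) ^ (j + 1) * poch (β + 1) (l + k + 1) /
        (k.factorial * (j + 1).factorial * poch (β + 1) (l + 1)) * ((j + 1 : ℕ) : ℝ)
      = (-1 : ℝ) ^ j * poch (β + 1) (l + k + 1 + 1) /
        ((k + 1).factorial * j.factorial * poch (β + 1) (l + 1)) := by
  rw [poch_succ_aux _ (l + k + 1), poch_succ_aux _ l, Nat.factorial_succ, Nat.factorial_succ]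
  have h1 := (poch_pos_aux (β + 1) (by linarith) l).ne'
  have h2 : β + 1 + (l : ℝ) ≠ 0 := by positivity
  have h3 : (k.factorial : ℝ) ≠ 0 := by positivity
  have h4 : (j.factorial : ℝ) ≠ 0 := by positivity
  have h5 : (k : ℝ) + 1 ≠ 0 := by positivity
  have h6 : (j : ℝ) + 1 ≠ 0 := by positivity
  generalize poch (β + 1) (l + k + 1) = P
  push_cast
  field_simp
  ring

/-- Action of the raising operator `a₁† = z − ∂_w` on the 2D Laguerre polynomials:
`z·Z^{(β)}_{m,n}(z,w) − ∂_w Z^{(β)}_{m,n}(z,w) = Z^{(β)}_{m+1,n}(z,w)`. -/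
theorem raising_a1_dagger (β : ℝ) (hβ : 0 ≤ β) (m n : ℕ) (hmn : n ≤ m) (z w : ℂ) :
    z * Zc β m n z w - deriv (fun w' => Zc β m n z w') w = Zc β (m + 1) n z w := by
  have hp := fun j => (poch_pos_aux (β + 1) (by linarith) j).ne'
  rw [Zc_deriv_aux, Finset.sum_range_succ]
  unfold Zc
  rw [Finset.sum_range_succ', Finset.sum_range_succ' _ n, mul_add, Finset.mul_sum,
    add_sub_add_comm, ← Finset.sum_sub_distrib]
  congr 1
  · apply Finset.sum_congr rfl
    intro k hk
    have hk' := Finset.mem_range.mp hk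
    obtain ⟨j, rfl⟩ := Nat.exists_eq_add_of_le hk'
    obtain ⟨d, rfl⟩ := Nat.exists_eq_add_of_le hmn
    have e1 : k.succ + j - (k + 1) = j := by omega
    have e2 : k.succ + j - k = j + 1 := by omega
    have e3 : k.succ + j + d - (k + 1) = j + d := by omega
    have e4 : k.succ + j + d - k = j + d + 1 := by omega
    have e5 : k.succ + j + d + 1 - (k + 1) = j + d + 1 := by omega
    have e6 : k.succ + j + d = j + d + k + 1 := by omega
    rw [e1, e2, e3, e4, e5, e6, ← coef_aux β hβ (j + d) k j]
    rw [Complex.ofReal_sub, Complex.ofReal_mul _ ((j + 1 : ℕ) : ℝ), Complex.ofReal_natCast,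
      Nat.add_sub_cancel]
    ring
  · simp only [Nat.sub_zero, Nat.sub_self]
    have h : ∀ j, (-1 : ℝ) ^ n * poch (β + 1) j /
        ((Nat.factorial 0 : ℝ) * n.factorial * poch (β + 1) j) = (-1) ^ n / n.factorial := by
      intro j
      have := hp j
      have h4 : (n.factorial : ℝ) ≠ 0 := by positivity
      rw [Nat.factorial_zero]
      push_cast
      field_simp
    rw [h, h]
    push_cast
    ring
end

section
/- For every real β ≥ 0, all integers m ≥ n ≥ 1, and all z, w ∈ ℂ: w · ∂_w Z^{(β)}_{m,n}(z,w) = n · Z^{(β)}_{m,n}(z,w) − (β+m) · Z^{(β)}_{m−1,n−1}(z,w). Consequently, also (z ∂_z − w ∂_w) Z^{(β)}_{m,n}(z,w) = (m−n) · Z^{(β)}_{m,n}(z,w) holds for all m ≥ n ≥ 0. (Complex-variable form of the differential recurrences q̄ ∂_{q̄} Z = nZ − (β+m)Z_{m−1,n−1} and (q∂_q − q̄∂_{q̄})Z = (m−n)Z.) -/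
open Finset

lemma poch_ne (β : ℝ) (hβ : 0 ≤ β) (j : ℕ) : poch (β + 1) j ≠ 0 := by
  unfold poch
  refine Finset.prod_ne_zero_iff.mpr fun i _ => ?_
  positivity

lemma mul_pow_pred (z : ℂ) (j : ℕ) : z * ((j : ℂ) * z ^ (j - 1)) = (j : ℂ) * z ^ j := by
  cases j with
  | zero => simp
  | succ j => simp only [Nat.add_sub_cancel]; ring

lemma euler_w (β : ℝ) (m n : ℕ) (z w : ℂ) :
    w * deriv (fun w' => Zc β m n z w') w = ∑ k ∈ Finset.range (n + 1),
    ((n - k : ℕ) : ℂ) * ((((-1 : ℝ) ^ (n - k) * poch (β + 1) m /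
        (k.factorial * (n - k).factorial * poch (β + 1) (m - k)) : ℝ) : ℂ) *
      z ^ (m - k) * w ^ (n - k)) := by
  have h : HasDerivAt (fun w' => Zc β m n z w') (∑ k ∈ Finset.range (n + 1),
    (((-1 : ℝ) ^ (n - k) * poch (β + 1) m /
        (k.factorial * (n - k).factorial * poch (β + 1) (m - k)) : ℝ) : ℂ) *
      z ^ (m - k) * (((n - k : ℕ) : ℂ) * w ^ (n - k - 1))) w := by
    unfold Zc
    exact HasDerivAt.fun_sum fun k _ => (hasDerivAt_pow (n - k) w).const_mul _
  rw [h.deriv, Finset.mul_sum]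
  refine Finset.sum_congr rfl fun k _ => ?_
  rw [mul_left_comm, mul_pow_pred]
  ring

lemma euler_z (β : ℝ) (m n : ℕ) (z w : ℂ) :
    z * deriv (fun z' => Zc β m n z' w) z = ∑ k ∈ Finset.range (n + 1),
    ((m - k : ℕ) : ℂ) * ((((-1 : ℝ) ^ (n - k) * poch (β + 1) m /
        (k.factorial * (n - k).factorial * poch (β + 1) (m - k)) : ℝ) : ℂ) *
      z ^ (m - k) * w ^ (n - k)) := by
  have h : HasDerivAt (fun z' => Zc β m n z' w) (∑ k ∈ Finset.range (n + 1),
    (((-1 : ℝ) ^ (n - k) * poch (β + 1) m /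
        (k.factorial * (n - k).factorial * poch (β + 1) (m - k)) : ℝ) : ℂ) *
      (((m - k : ℕ) : ℂ) * z ^ (m - k - 1)) * w ^ (n - k)) z := by
    unfold Zc
    exact HasDerivAt.fun_sum fun k _ => ((hasDerivAt_pow (m - k) z).const_mul _).mul_const _
  rw [h.deriv, Finset.mul_sum]
  refine Finset.sum_congr rfl fun k _ => ?_
  rw [← mul_assoc, mul_left_comm, mul_pow_pred]
  ring

/-- Differential recurrences: `w ∂_w Z^{(β)}_{m,n} = n Z^{(β)}_{m,n} − (β+m) Z^{(β)}_{m−1,n−1}`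
for `m ≥ n ≥ 1`, and consequently `(z∂_z − w∂_w) Z^{(β)}_{m,n} = (m−n) Z^{(β)}_{m,n}`
for all `m ≥ n ≥ 0`. -/
theorem diff_recurrence_w (β : ℝ) (hβ : 0 ≤ β) :
    (∀ m n : ℕ, 1 ≤ n → n ≤ m → ∀ z w : ℂ,
        w * deriv (fun w' => Zc β m n z w') w
          = (n : ℂ) * Zc β m n z w - ((β + m : ℝ) : ℂ) * Zc β (m - 1) (n - 1) z w) ∧
    (∀ m n : ℕ, n ≤ m → ∀ z w : ℂ,
        z * deriv (fun z' => Zc β m n z' w) z - w * deriv (fun w' => Zc β m n z w') w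
          = (((m : ℝ) - n : ℝ) : ℂ) * Zc β m n z w) := by
  constructor
  · intro m n hn hm z w
    obtain ⟨n, rfl⟩ : ∃ a, n = a + 1 := ⟨n - 1, by omega⟩
    obtain ⟨m, rfl⟩ : ∃ a, m = a + 1 := ⟨m - 1, by omega⟩
    have key : ((β + (m + 1 : ℕ) : ℝ) : ℂ) * Zc β m n z w = ∑ k ∈ Finset.range (n + 1 + 1),
      (k : ℂ) * ((((-1 : ℝ) ^ (n + 1 - k) * poch (β + 1) (m + 1) /
        (k.factorial * (n + 1 - k).factorial * poch (β + 1) (m + 1 - k)) : ℝ) : ℂ) *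
      z ^ (m + 1 - k) * w ^ (n + 1 - k)) := by
      rw [Finset.sum_range_succ']
      simp only [Nat.cast_zero, zero_mul, add_zero, Nat.add_sub_add_right]
      unfold Zc
      rw [Finset.mul_sum]
      refine Finset.sum_congr rfl fun k _ => ?_
      rw [← mul_assoc, ← mul_assoc, ← mul_assoc, ← mul_assoc]
      congr 2
      rw [← Complex.ofReal_natCast, ← Complex.ofReal_mul, ← Complex.ofReal_mul]
      congr 1
      have hp : poch (β + 1) (m + 1) = poch (β + 1) m * (β + 1 + m) := by
        unfold poch; rw [Finset.prod_range_succ]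
      have h1 := poch_ne β hβ (m - k)
      have h2 : (k.factorial : ℝ) ≠ 0 := by positivity
      have h3 : ((n - k).factorial : ℝ) ≠ 0 := by positivity
      have h4 : (k : ℝ) + 1 ≠ 0 := by positivity
      rw [hp, Nat.factorial_succ]
      push_cast
      field_simp
      ring
    rw [euler_w, Nat.add_sub_cancel, Nat.add_sub_cancel, key]
    unfold Zc
    rw [Finset.mul_sum, ← Finset.sum_sub_distrib]
    refine Finset.sum_congr rfl fun k hk => ?_
    rw [Nat.cast_sub (Nat.lt_succ_iff.mp (Finset.mem_range.mp hk)), sub_mul]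
  · intro m n hm z w
    rw [euler_z, euler_w, ← Finset.sum_sub_distrib]
    unfold Zc
    rw [Finset.mul_sum]
    refine Finset.sum_congr rfl fun k hk => ?_
    have hk' := Nat.lt_succ_iff.mp (Finset.mem_range.mp hk)
    rw [Nat.cast_sub hk', Nat.cast_sub (hk'.trans hm), ← sub_mul]
    congr 1
    push_cast
    ring
end
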